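/- arXiv:1612.04407 — 7 statements merged into one kernel-verified Lean document; each statement's English description precedes it below -/
import Mathlib

section
/- Let U : (0,∞) → ℝ be twice continuously differentiable, strictly increasing, strictly concave, with U'((0,∞)) = (0,∞) (i.e. U'(x) → ∞ as x → 0+ and U'(x) → 0 as x → ∞). Define the convex conjugate Ũ(y) := sup_{x>0} (U(x) − x·y) for y > 0. If x ↦ x·U'(x) is non-decreasing on (0,∞), then the map z ↦ Ũ(e^z) is convex on ℝ. -/
/-!
Since `U'` decreases from `∞` to `0`, every `e^z` equals `U' x` for some `x > 0`, and this `x`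
maximises `t ↦ U t - t * e^z`; hence `Ũ(e^z) = U x - x * U' x` with `z = log (U' x)`.
Formally `d/dz Ũ(e^z) = -x * U' x`, so the claim is that the line of this slope supports
`z ↦ Ũ(e^z)` from below at `log (U' a)`, for every `a > 0`. In the parameter `x` this says that
`h x = U x - x * U' x + a * U' a * log (U' x)` has its minimum at `a`, which follows from
`h' x = U'' x / U' x * (a * U' a - x * U' x)`, `U'' < 0 < U'` and the monotonicity of `x * U' x`.
A function with a supporting line at every point is convex.
-/

/-- First-derivative test on `(0,∞)`: a function decreasing before `a` and increasing after `a`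
is minimal at `a`. -/
lemma le_of_deriv_sign {f f' : ℝ → ℝ} {a : ℝ} (ha : 0 < a)
    (hf : ∀ x, 0 < x → HasDerivAt f (f' x) x)
    (hl : ∀ x, 0 < x → x ≤ a → f' x ≤ 0) (hr : ∀ x, a ≤ x → 0 ≤ f' x)
    {x : ℝ} (hx : 0 < x) : f a ≤ f x := by
  rcases le_total x a with h | h
  · refine antitoneOn_of_hasDerivWithinAt_nonpos (f' := f') (convex_Icc x a)
      (fun t ht => (hf t (hx.trans_le ht.1)).continuousAt.continuousWithinAt)
      (fun t ht => ?_) (fun t ht => ?_) (Set.left_mem_Icc.2 h) (Set.right_mem_Icc.2 h) h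
    all_goals have ht' := interior_subset ht
    · exact (hf t (hx.trans_le ht'.1)).hasDerivWithinAt
    · exact hl t (hx.trans_le ht'.1) ht'.2
  · refine monotoneOn_of_hasDerivWithinAt_nonneg (f' := f') (convex_Icc a x)
      (fun t ht => (hf t (ha.trans_le ht.1)).continuousAt.continuousWithinAt)
      (fun t ht => ?_) (fun t ht => ?_) (Set.left_mem_Icc.2 h) (Set.right_mem_Icc.2 h) h
    all_goals have ht' := interior_subset ht
    · exact (hf t (ha.trans_le ht'.1)).hasDerivWithinAt
    · exact hr t ht'.1

lemma convexOn_univ_of_support {f : ℝ → ℝ} (h : ∀ w, ∃ s, ∀ z, f w + s * (z - w) ≤ f z) :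
    ConvexOn ℝ Set.univ f := by
  refine ⟨convex_univ, fun x _ y _ p q hp hq hpq => ?_⟩
  simp only [smul_eq_mul]
  obtain ⟨s, hs⟩ := h (p * x + q * y)
  have h1 := mul_le_mul_of_nonneg_left (hs x) hp
  have h2 := mul_le_mul_of_nonneg_left (hs y) hq
  obtain rfl : p = 1 - q := by linarith
  linarith


/-- Let `U` be a utility function on `(0,∞)`: twice continuously differentiable,
strictly increasing (`U' > 0`), strictly concave (`U'' < 0`), with `U'(x) → ∞` as
`x → 0⁺` and `U'(x) → 0` as `x → ∞`.  Let `Ũ(y) = sup_{x>0} (U x - x*y)` be the convex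
conjugate.  If `x ↦ x * U' x` is non-decreasing on `(0,∞)`, then `z ↦ Ũ(e^z)` is
convex on `ℝ`. -/
theorem conjugate_exp_convex
    (U U' U'' : ℝ → ℝ)
    (hU' : ∀ x ∈ Set.Ioi (0 : ℝ), HasDerivAt U (U' x) x)
    (hU'' : ∀ x ∈ Set.Ioi (0 : ℝ), HasDerivAt U' (U'' x) x)
    (hU''cont : ContinuousOn U'' (Set.Ioi (0 : ℝ)))
    (hinc : ∀ x ∈ Set.Ioi (0 : ℝ), 0 < U' x)
    (hconc : ∀ x ∈ Set.Ioi (0 : ℝ), U'' x < 0)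
    (hlim0 : Filter.Tendsto U' (nhdsWithin 0 (Set.Ioi 0)) Filter.atTop)
    (hlimtop : Filter.Tendsto U' Filter.atTop (nhds 0))
    (hmono : ∀ x ∈ Set.Ioi (0 : ℝ), ∀ y ∈ Set.Ioi (0 : ℝ),
      x ≤ y → x * U' x ≤ y * U' y)
    (Utilde : ℝ → ℝ)
    (hUt : ∀ y ∈ Set.Ioi (0 : ℝ),
      Utilde y = sSup {z | ∃ x ∈ Set.Ioi (0 : ℝ), z = U x - x * y}) :
    ConvexOn ℝ Set.univ (fun z : ℝ => Utilde (Real.exp z)) := by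
  simp only [Set.mem_Ioi] at hU' hU'' hinc hconc hmono hUt
  have hcont : ContinuousOn U' (Set.Ioi 0) :=
    fun x hx => (hU'' x hx).continuousAt.continuousWithinAt
  have hanti : AntitoneOn U' (Set.Ioi 0) :=
    antitoneOn_of_hasDerivWithinAt_nonpos (f' := U'') (convex_Ioi 0) hcont
      (fun x hx => (hU'' x (interior_subset hx)).hasDerivWithinAt)
      (fun x hx => (hconc x (interior_subset hx)).le)
  have hsurj : ∀ z : ℝ, ∃ x, 0 < x ∧ U' x = Real.exp z := by
    intro z
    obtain ⟨x₀, hx₀, hx₀pos⟩ :=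
      ((hlim0.eventually_ge_atTop (Real.exp z)).and self_mem_nhdsWithin).exists
    obtain ⟨x₁, hx₁, hx₁pos⟩ :=
      ((hlimtop.eventually_le_const (Real.exp_pos z)).and
        (Filter.eventually_gt_atTop (0 : ℝ))).exists
    obtain ⟨x, hx, hxz⟩ :=
      isPreconnected_Ioi.intermediate_value hx₁pos hx₀pos hcont ⟨hx₁, hx₀⟩
    exact ⟨x, hx, hxz⟩
  have hval : ∀ a, 0 < a → Utilde (U' a) = U a - a * U' a := by
    intro a ha
    rw [hUt _ (hinc a ha)]
    refine IsGreatest.csSup_eq ⟨⟨a, ha, rfl⟩, ?_⟩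
    rintro _ ⟨x, hx, rfl⟩
    have := le_of_deriv_sign (f := fun t => t * U' a - U t) (f' := fun t => 1 * U' a - U' t) ha
      (fun t ht => ((hasDerivAt_id t).mul_const (U' a)).sub (hU' t ht))
      (fun t ht hta => by linarith [hanti (Set.mem_Ioi.2 ht) (Set.mem_Ioi.2 ha) hta])
      (fun t hat => by
        linarith [hanti (Set.mem_Ioi.2 ha) (Set.mem_Ioi.2 (ha.trans_le hat)) hat])
      hx
    linarith
  refine convexOn_univ_of_support fun w => ?_
  obtain ⟨a, ha, haw⟩ := hsurj w
  refine ⟨-(a * U' a), fun z => ?_⟩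
  obtain ⟨b, hb, hbz⟩ := hsurj z
  have key := le_of_deriv_sign
    (f := fun t => U t - t * U' t + a * U' a * Real.log (U' t))
    (f' := fun t => U'' t / U' t * (a * U' a - t * U' t)) ha
    (fun t ht => by
      have hne := (hinc t ht).ne'
      refine (((hU' t ht).sub ((hasDerivAt_id' t).mul (hU'' t ht))).add
        (((hU'' t ht).log hne).const_mul (a * U' a))).congr_deriv ?_
      field_simp
      ring)
    (fun t ht hta => mul_nonpos_of_nonpos_of_nonneg
      (div_nonpos_of_nonpos_of_nonneg (hconc t ht).le (hinc t ht).le)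
      (by linarith [hmono t ht a ha hta]))
    (fun t hat => mul_nonneg_of_nonpos_of_nonpos
      (div_nonpos_of_nonpos_of_nonneg (hconc t (ha.trans_le hat)).le (hinc t (ha.trans_le hat)).le)
      (by linarith [hmono a ha t (ha.trans_le hat) hat]))
    hb
  have hlogz : Real.log (U' b) = z := by rw [hbz, Real.log_exp]
  have hlogw : Real.log (U' a) = w := by rw [haw, Real.log_exp]
  simp only [hlogz, hlogw] at key
  simp only [← haw, ← hbz, hval a ha, hval b hb]
  linarith
end

section
/- Let U : (0,∞) → ℝ be twice continuously differentiable, strictly increasing, strictly concave, with lim_{x→0+} U'(x) = ∞, lim_{x→∞} U'(x) = 0, and U(0) := lim_{x→0+} U(x) > −∞. Let Ũ(y) := sup_{x>0}(U(x) − x·y) and I := (U')⁻¹, and suppose there exist β ∈ (0,1) and γ ∈ (1,∞) such that I(β·y) ≤ γ·I(y) for all y > 0. Then lim_{y→∞} Ũ(y) = U(0), and for every η > 0, Ũ(η) − U(0) ≥ ((1−β)/(β·γ))·η·I(η). -/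
/-!
By concavity `U` lies below each of its tangents, `U x ≤ U a + U' a * (x - a)`; everything follows
from this by choosing `a`, and letting `x → 0+` it gives `U0 + U' a * a ≤ U a`.

* Taking `a = I y` bounds the set defining the conjugate, so the supremum is a genuine one and
  `U x - x * y ≤ Ũ y` for all `x > 0`. Letting `x → 0+`, `U0 ≤ Ũ y`.
* If `y ≥ U' a`, then `U x - x * y ≤ U a` for all `x > 0`, so `Ũ y ≤ U a`, and `U a` is close to
  `U0` for small `a`. This gives the limit.
* For the lower bound take `a = I (η / β)`, so that `U' a = η / β`. Then
  `Ũ η - U0 ≥ U a - a * η - U0 ≥ a * η / β - a * η = (1 - β) / β * η * a`, and the growth condition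
  at `η / β` says `a ≥ I η / γ`.
-/

lemma le_tangent {U U' U'' : ℝ → ℝ}
    (hU' : ∀ x ∈ Set.Ioi (0 : ℝ), HasDerivAt U (U' x) x)
    (hU'' : ∀ x ∈ Set.Ioi (0 : ℝ), HasDerivAt U' (U'' x) x)
    (hconc : ∀ x ∈ Set.Ioi (0 : ℝ), U'' x < 0)
    {a x : ℝ} (ha : 0 < a) (hx : 0 < x) : U x ≤ U a + U' a * (x - a) := by
  have hc : ConcaveOn ℝ (Set.Ioi 0) U :=
    concaveOn_of_hasDerivWithinAt2_nonpos (f' := U') (f'' := U'') (convex_Ioi 0)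
      (fun x hx => (hU' x hx).continuousAt.continuousWithinAt)
      (fun x hx => (hU' x (interior_subset hx)).hasDerivWithinAt)
      (fun x hx => (hU'' x (interior_subset hx)).hasDerivWithinAt)
      (fun x hx => (hconc x (interior_subset hx)).le)
  rcases lt_trichotomy x a with h | rfl | h
  · have := hc.le_slope_of_hasDerivAt hx ha h (hU' a ha)
    rw [slope_def_field, le_div_iff₀ (by linarith)] at this
    linarith
  · simp
  · have := hc.slope_le_of_hasDerivAt ha hx h (hU' a ha)
    rw [slope_def_field, div_le_iff₀ (by linarith)] at this
    linarith


/-- For a utility function `U` on `(0,∞)` (twice continuously differentiable, `U' > 0`,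
`U'' < 0`, `U'(0+) = ∞`, `U'(∞) = 0`) with finite limit `U(0) = lim_{x→0+} U(x)`,
conjugate `Ũ(y) = sup_{x>0}(U x - x*y)` and `I = (U')⁻¹`, if `I(β*y) ≤ γ * I y` for all
`y > 0` for some `β ∈ (0,1)`, `γ ∈ (1,∞)`, then `Ũ(y) → U(0)` as `y → ∞` and for every
`η > 0`, `Ũ(η) - U(0) ≥ ((1-β)/(β*γ)) * η * I(η)`. -/
theorem conjugate_lower_bound
    (U U' U'' : ℝ → ℝ)
    (hU' : ∀ x ∈ Set.Ioi (0 : ℝ), HasDerivAt U (U' x) x)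
    (hU'' : ∀ x ∈ Set.Ioi (0 : ℝ), HasDerivAt U' (U'' x) x)
    (hU''cont : ContinuousOn U'' (Set.Ioi (0 : ℝ)))
    (hinc : ∀ x ∈ Set.Ioi (0 : ℝ), 0 < U' x)
    (hconc : ∀ x ∈ Set.Ioi (0 : ℝ), U'' x < 0)
    (hlim0 : Filter.Tendsto U' (nhdsWithin 0 (Set.Ioi 0)) Filter.atTop)
    (hlimtop : Filter.Tendsto U' Filter.atTop (nhds 0))
    (U0 : ℝ)
    (hU0 : Filter.Tendsto U (nhdsWithin 0 (Set.Ioi 0)) (nhds U0))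
    (I : ℝ → ℝ)
    (hIpos : ∀ y ∈ Set.Ioi (0 : ℝ), I y ∈ Set.Ioi (0 : ℝ))
    (hIinv : ∀ y ∈ Set.Ioi (0 : ℝ), U' (I y) = y)
    (β γ : ℝ) (hβ0 : 0 < β) (hβ1 : β < 1) (hγ : 1 < γ)
    (hβγ : ∀ y ∈ Set.Ioi (0 : ℝ), I (β * y) ≤ γ * I y)
    (Utilde : ℝ → ℝ)
    (hUt : ∀ y ∈ Set.Ioi (0 : ℝ),
      Utilde y = sSup {z | ∃ x ∈ Set.Ioi (0 : ℝ), z = U x - x * y}) :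
    Filter.Tendsto Utilde Filter.atTop (nhds U0) ∧
    ∀ η ∈ Set.Ioi (0 : ℝ), (1 - β) / (β * γ) * η * I η ≤ Utilde η - U0 := by
  have htan : ∀ {a x : ℝ}, 0 < a → 0 < x → U x ≤ U a + U' a * (x - a) :=
    fun ha hx => le_tangent hU' hU'' hconc ha hx
  have hle : ∀ {y x : ℝ}, 0 < y → 0 < x → U x - x * y ≤ Utilde y := by
    intro y x hy hx
    rw [hUt y hy]
    refine le_csSup ⟨U (I y) - I y * y, ?_⟩ ⟨x, hx, rfl⟩
    rintro z ⟨t, ht, rfl⟩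
    have := htan (hIpos y hy) ht
    rw [hIinv y hy] at this
    linarith
  have hid : Filter.Tendsto (fun x : ℝ => x) (nhdsWithin 0 (Set.Ioi 0)) (nhds 0) :=
    Filter.tendsto_id.mono_left nhdsWithin_le_nhds
  have hlow : ∀ {y : ℝ}, 0 < y → U0 ≤ Utilde y := by
    intro y hy
    have hl : Filter.Tendsto (fun x => U x - x * y) (nhdsWithin 0 (Set.Ioi 0)) (nhds U0) := by
      simpa using hU0.sub (hid.mul_const y)
    exact le_of_tendsto hl (by filter_upwards [self_mem_nhdsWithin] with x hx using hle hy hx)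
  have htan0 : ∀ {a : ℝ}, 0 < a → U0 + U' a * a ≤ U a := by
    intro a ha
    have hr : Filter.Tendsto (fun x => U a + U' a * (x - a)) (nhdsWithin 0 (Set.Ioi 0))
        (nhds (U a + U' a * (0 - a))) := ((hid.sub_const a).const_mul _).const_add _
    have := le_of_tendsto_of_tendsto hU0 hr
      (by filter_upwards [self_mem_nhdsWithin] with x hx using htan ha hx)
    linarith
  refine ⟨?_, fun η hη => ?_⟩
  · rw [tendsto_order]
    refine ⟨fun c hc => ?_, fun c hc => ?_⟩
    · filter_upwards [Filter.eventually_gt_atTop 0] with y hy using hc.trans_le (hlow hy)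
    · obtain ⟨a, hac, ha⟩ := ((hU0.eventually_lt_const hc).and self_mem_nhdsWithin).exists
      have ha : 0 < a := ha
      filter_upwards [Filter.eventually_ge_atTop (U' a)] with y hy
      have hU'a : 0 < U' a := hinc a ha
      rw [hUt y (hU'a.trans_le hy)]
      refine lt_of_le_of_lt (csSup_le ⟨_, 1, Set.mem_Ioi.2 one_pos, rfl⟩ ?_) hac
      rintro z ⟨t, ht, rfl⟩
      have ht : 0 < t := ht
      have h1 := htan ha ht
      have h2 : t * U' a ≤ t * y := mul_le_mul_of_nonneg_left hy ht.le
      have h3 : 0 < U' a * a := mul_pos hU'a ha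
      linarith
  · have hη : 0 < η := hη
    have hb : 0 < η / β := div_pos hη hβ0
    have ha : 0 < I (η / β) := hIpos _ hb
    have h1 := htan0 ha
    rw [hIinv _ hb] at h1
    have h2 := hle hη ha
    have h3 := hβγ (η / β) hb
    rw [mul_div_cancel₀ η hβ0.ne'] at h3
    have hγ0 : 0 < γ := by linarith
    calc (1 - β) / (β * γ) * η * I η ≤ (1 - β) / (β * γ) * η * (γ * I (η / β)) := by
          have : 0 ≤ 1 - β := by linarith
          gcongr
      _ = η / β * I (η / β) - I (η / β) * η := by field_simp
      _ ≤ Utilde η - U0 := by linarith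
end

section
/- Let (Ω, F, P) be a probability space and Y : Ω → (0,∞) a random variable. Let U : (0,∞) → ℝ be twice continuously differentiable, strictly increasing, strictly concave, with lim_{x→0+} U'(x) = ∞, lim_{x→∞} U'(x) = 0, finite limit U(0) := lim_{x→0+} U(x), and such that for some β ∈ (0,1), γ ∈ (1,∞), I(β·y) ≤ γ·I(y) for all y > 0, where I := (U')⁻¹. Let Ũ(y) := sup_{x>0}(U(x) − x·y). If E[Ũ(Y)²] < ∞, then the random variable Y·Ũ'(Y) (= −Y·I(Y)) is square integrable: E[(Y·Ũ'(Y))²] < ∞. -/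
/-!
The dual function grows at least as fast as `y * I y`. Put `x = I (y / β)`, so `U' x = y / β`.
The tangent line of the concave function `U` at `x`, evaluated at `0`, gives
`U0 + x * (y / β) ≤ U x`, and the definition of the conjugate gives `U x - x * y ≤ Utilde y`.
Hence `(1 / β - 1) * (x * y) ≤ Utilde y - U0`, while `I y = I (β * (y / β)) ≤ γ * x`.
Altogether `0 ≤ y * I y ≤ C * (Utilde y - U0)` with `C = γ / (1 / β - 1)`, and so `(Y * I Y) ^ 2`
is dominated by `2 * C ^ 2 * (Utilde Y ^ 2 + U0 ^ 2)`. Measurability of `I ∘ Y` holds because `I`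
is decreasing on `(0, ∞)`.
-/

open MeasureTheory

/-- Tangent-line inequality for a function with decreasing derivative on `(0, ∞)`. -/
lemma le_tangent_of_deriv_antitoneOn {U U' : ℝ → ℝ}
    (hU' : ∀ x ∈ Set.Ioi (0 : ℝ), HasDerivAt U (U' x) x)
    (hanti : AntitoneOn U' (Set.Ioi 0)) {a x : ℝ} (ha : 0 < a) (hx : 0 < x) :
    U x ≤ U a + U' a * (x - a) := by
  have mvt : ∀ p q : ℝ, 0 < p → p < q → ∃ c ∈ Set.Ioo p q, U' c * (q - p) = U q - U p := by
    intro p q hp hpq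
    obtain ⟨c, hc, h⟩ := exists_hasDerivAt_eq_slope U U' hpq
      (fun z hz => (hU' z (hp.trans_le hz.1)).continuousAt.continuousWithinAt)
      (fun z hz => hU' z (hp.trans hz.1))
    refine ⟨c, hc, ?_⟩
    rw [h, div_mul_cancel₀ _ (sub_pos.2 hpq).ne']
  rcases lt_trichotomy x a with h | h | h
  · obtain ⟨c, hc, e⟩ := mvt x a hx h
    have := hanti (hx.trans hc.1 : 0 < c) ha hc.2.le
    nlinarith
  · simp [h]
  · obtain ⟨c, hc, e⟩ := mvt a x ha h
    have := hanti ha (ha.trans hc.1 : 0 < c) hc.1.le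
    nlinarith

/-- Square integrability of `Y * Ũ'(Y)` (Lemma 3.3 of the paper).  Let `Y` be a
positive random variable on a probability space, `U` a utility function on `(0,∞)`
(twice continuously differentiable, `U' > 0`, `U'' < 0`, `U'(0+) = ∞`, `U'(∞) = 0`,
finite `U(0)`), whose inverse marginal utility `I = (U')⁻¹` satisfies
`I(β*y) ≤ γ*I(y)` for some `β ∈ (0,1)`, `γ ∈ (1,∞)`.  If `Ũ(Y)` is square integrable,
where `Ũ(y) = sup_{x>0}(U x - x*y)` is the convex conjugate, then `Y * Ũ'(Y) = -Y * I(Y)`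
is square integrable. -/
theorem square_integrable_Y_mul_dual_deriv
    {Ω : Type*} [MeasurableSpace Ω] (P : Measure Ω) [IsProbabilityMeasure P]
    (Y : Ω → ℝ) (hYmeas : Measurable Y) (hYpos : ∀ ω, 0 < Y ω)
    (U U' U'' : ℝ → ℝ)
    (hU' : ∀ x ∈ Set.Ioi (0 : ℝ), HasDerivAt U (U' x) x)
    (hU'' : ∀ x ∈ Set.Ioi (0 : ℝ), HasDerivAt U' (U'' x) x)
    (hU''cont : ContinuousOn U'' (Set.Ioi (0 : ℝ)))
    (hinc : ∀ x ∈ Set.Ioi (0 : ℝ), 0 < U' x)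
    (hconc : ∀ x ∈ Set.Ioi (0 : ℝ), U'' x < 0)
    (hlim0 : Filter.Tendsto U' (nhdsWithin 0 (Set.Ioi 0)) Filter.atTop)
    (hlimtop : Filter.Tendsto U' Filter.atTop (nhds 0))
    (U0 : ℝ)
    (hU0 : Filter.Tendsto U (nhdsWithin 0 (Set.Ioi 0)) (nhds U0))
    (I : ℝ → ℝ)
    (hIpos : ∀ y ∈ Set.Ioi (0 : ℝ), I y ∈ Set.Ioi (0 : ℝ))
    (hIinv : ∀ y ∈ Set.Ioi (0 : ℝ), U' (I y) = y)
    (β γ : ℝ) (hβ0 : 0 < β) (hβ1 : β < 1) (hγ : 1 < γ)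
    (hβγ : ∀ y ∈ Set.Ioi (0 : ℝ), I (β * y) ≤ γ * I y)
    (Utilde : ℝ → ℝ)
    (hUt : ∀ y ∈ Set.Ioi (0 : ℝ),
      Utilde y = sSup {z | ∃ x ∈ Set.Ioi (0 : ℝ), z = U x - x * y})
    (hL2 : Integrable (fun ω => (Utilde (Y ω)) ^ 2) P) :
    Integrable (fun ω => (Y ω * (-(I (Y ω)))) ^ 2) P := by
  have hstrict : StrictAntiOn U' (Set.Ioi 0) := by
    refine strictAntiOn_of_deriv_neg (convex_Ioi 0)
      (fun x hx => (hU'' x hx).continuousAt.continuousWithinAt) (fun x hx => ?_)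
    rw [interior_Ioi] at hx
    rw [(hU'' x hx).deriv]
    exact hconc x hx
  have htan : ∀ a x : ℝ, 0 < a → 0 < x → U x ≤ U a + U' a * (x - a) := fun a x ha hx =>
    le_tangent_of_deriv_antitoneOn hU' hstrict.antitoneOn ha hx
  -- the tangent at `x`, evaluated in the limit at `0`
  have htan0 : ∀ x : ℝ, 0 < x → U0 + U' x * x ≤ U x := by
    intro x hx
    have hlim : Filter.Tendsto (fun z => U x + U' x * (z - x)) (nhdsWithin 0 (Set.Ioi 0))
        (nhds (U x + U' x * (0 - x))) :=
      (Continuous.tendsto (by fun_prop) 0).mono_left nhdsWithin_le_nhds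
    have := le_of_tendsto_of_tendsto hU0 hlim
      (by filter_upwards [self_mem_nhdsWithin] with z hz using htan x z hx hz)
    linarith
  have hIanti : AntitoneOn I (Set.Ioi 0) := by
    intro p hp q hq hpq
    by_contra! h
    have := hstrict (hIpos p hp) (hIpos q hq) h
    rw [hIinv p hp, hIinv q hq] at this
    linarith
  have hImeas : Measurable (fun ω => I (Y ω)) := by
    have h1 : Antitone (fun y : Set.Ioi (0 : ℝ) => I y) := fun p q hpq => hIanti p.2 q.2 hpq
    exact h1.measurable.comp (hYmeas.subtype_mk (h := hYpos))
  have hconj : ∀ y x : ℝ, 0 < y → 0 < x → U x - x * y ≤ Utilde y := by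
    intro y x hy hx
    rw [hUt y hy]
    -- the supremum is attained at `I y`, so in particular the set is bounded above
    refine le_csSup ⟨U (I y) - I y * y, ?_⟩ ⟨x, hx, rfl⟩
    rintro z ⟨w, hw, rfl⟩
    have := htan (I y) w (hIpos y hy) hw
    rw [hIinv y hy] at this
    linarith
  have hk : 0 < 1 / β - 1 := by
    rw [sub_pos, lt_div_iff₀ hβ0]
    linarith
  have key : ∀ y : ℝ, 0 < y → y * I y ≤ γ / (1 / β - 1) * (Utilde y - U0) := by
    intro y hy
    have hyb : 0 < y / β := div_pos hy hβ0
    have hx : 0 < I (y / β) := hIpos _ hyb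
    have h1 := hconj y _ hy hx
    have h2 := htan0 _ hx
    rw [hIinv _ hyb] at h2
    have h3 := hβγ _ hyb
    rw [mul_div_cancel₀ _ hβ0.ne'] at h3
    have h4 : (1 / β - 1) * (I (y / β) * y) ≤ Utilde y - U0 := by
      have : (1 / β - 1) * (I (y / β) * y) = y / β * I (y / β) - I (y / β) * y := by ring
      linarith
    calc y * I y ≤ y * (γ * I (y / β)) := by gcongr
      _ = γ / (1 / β - 1) * ((1 / β - 1) * (I (y / β) * y)) := by
        rw [← mul_assoc (γ / _), div_mul_cancel₀ _ hk.ne']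
        ring
      _ ≤ γ / (1 / β - 1) * (Utilde y - U0) := by gcongr
  refine Integrable.mono' ((hL2.add (integrable_const (U0 ^ 2))).const_mul
    (2 * (γ / (1 / β - 1)) ^ 2)) ((hYmeas.mul hImeas.neg).pow_const 2).aestronglyMeasurable
    (Filter.Eventually.of_forall fun ω => ?_)
  rw [Real.norm_of_nonneg (sq_nonneg _)]
  have h0 : 0 ≤ Y ω * I (Y ω) := (mul_pos (hYpos ω) (hIpos _ (hYpos ω))).le
  calc (Y ω * -I (Y ω)) ^ 2 = (Y ω * I (Y ω)) ^ 2 := by ring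
    _ ≤ (γ / (1 / β - 1) * (Utilde (Y ω) - U0)) ^ 2 :=
      pow_le_pow_left₀ h0 (key _ (hYpos ω)) 2
    _ = (γ / (1 / β - 1)) ^ 2 * (Utilde (Y ω) - U0) ^ 2 := by ring
    _ ≤ (γ / (1 / β - 1)) ^ 2 * (2 * (Utilde (Y ω) ^ 2 + U0 ^ 2)) := by
      gcongr
      nlinarith [sq_nonneg (Utilde (Y ω) + U0)]
    _ = 2 * (γ / (1 / β - 1)) ^ 2 * (Utilde (Y ω) ^ 2 + U0 ^ 2) := by ring
end

section
/- Let K ⊆ ℝ^N be a closed convex set with 0 ∈ K, σ an invertible N×N real matrix, θ, γ ∈ ℝ^N and r, y, s ∈ ℝ. Define δ_K(z) := sup_{π ∈ K} (−π·z) (with value +∞ allowed) and consider M := sup { x·s + v·y + ξ·γ : x > 0, v ∈ ℝ, ξ ∈ ℝ^N, v = x·r + ξ·θ, x⁻¹·(σᵀ)⁻¹·ξ ∈ K }. Then M = 0 if s + y·r + δ_K(−σ·(y·θ + γ)) ≤ 0, and M = +∞ otherwise. -/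
open Matrix

/-!
Writing `ξ = x • σᵀ π` with `π ∈ K`, the constraint set is parametrized by `x > 0` and `π ∈ K`, and
the objective becomes `x * a(π)` with `a(π) = s + y r + π ⬝ σ(yθ + γ)`. The condition
`s + y r + δ_K(-σ(yθ + γ)) ≤ 0` says exactly that `a(π) ≤ 0` for all `π ∈ K`. If it holds, every
value is nonpositive, and `π = 0`, `x → 0⁺` shows that the supremum is `0`. Otherwise some `π ∈ K`
has `a(π) > 0`, and letting `x → ∞` makes the objective unbounded.
-/

/-- A real shift can be moved across an inequality in `EReal`, even when the other term is
infinite. -/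
lemma coe_add_le_zero_iff (c : ℝ) (d : EReal) : (c : EReal) + d ≤ 0 ↔ d ≤ ((-c : ℝ) : EReal) := by
  induction d with
  | bot => simp
  | top => simp [-EReal.coe_neg]
  | coe d =>
    rw [← EReal.coe_add, ← EReal.coe_zero, EReal.coe_le_coe_iff, EReal.coe_le_coe_iff]
    constructor <;> intro h <;> linarith

/-- Change of variables `ξ = x • σᵀ π` in the set of objective values. -/
lemma objective_set_eq {N : ℕ} (K : Set (Fin N → ℝ))
    (σ : Matrix (Fin N) (Fin N) ℝ) (hσ : IsUnit σ.det) (θ γv : Fin N → ℝ) (r y s : ℝ) :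
    {m : EReal | ∃ x v ξ, 0 < x ∧ v = x * r + ξ ⬝ᵥ θ ∧
      x⁻¹ • (σ.transpose⁻¹.mulVec ξ) ∈ K ∧
      m = ((x * s + v * y + ξ ⬝ᵥ γv : ℝ) : EReal)} =
    {m : EReal | ∃ x : ℝ, ∃ π ∈ K, 0 < x ∧
      m = ((x * (s + y * r + π ⬝ᵥ σ.mulVec (y • θ + γv)) : ℝ) : EReal)} := by
  have hT : IsUnit σ.transpose.det := by rwa [Matrix.det_transpose]
  have key : ∀ (x : ℝ) (π : Fin N → ℝ),
      x * s + (x * r + (x • σ.transpose.mulVec π) ⬝ᵥ θ) * y + (x • σ.transpose.mulVec π) ⬝ᵥ γv =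
        x * (s + y * r + π ⬝ᵥ σ.mulVec (y • θ + γv)) := by
    intro x π
    rw [Matrix.dotProduct_mulVec, ← Matrix.mulVec_transpose]
    simp only [smul_dotProduct, dotProduct_add, dotProduct_smul, smul_eq_mul]
    ring
  ext m
  constructor
  · rintro ⟨x, v, ξ, hx, rfl, hK, rfl⟩
    refine ⟨x, _, hK, hx, ?_⟩
    rw [← key]
    have : x • σ.transpose.mulVec (x⁻¹ • (σ.transpose⁻¹.mulVec ξ)) = ξ := by
      rw [Matrix.mulVec_smul, smul_smul, mul_inv_cancel₀ hx.ne', one_smul, Matrix.mulVec_mulVec,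
        Matrix.mul_nonsing_inv _ hT, Matrix.one_mulVec]
    rw [this]
  · rintro ⟨x, π, hπ, hx, rfl⟩
    refine ⟨x, _, x • σ.transpose.mulVec π, hx, rfl, ?_, ?_⟩
    · rwa [Matrix.mulVec_smul, smul_smul, inv_mul_cancel₀ hx.ne', one_smul, Matrix.mulVec_mulVec,
        Matrix.nonsing_inv_mul _ hT, Matrix.one_mulVec]
    · rw [key]

/-- Computation of the conjugate penalty function `M(t,y,s,γ)` of the dual problem.
Let `K ⊆ ℝ^N` be closed and convex with `0 ∈ K`, `σ` an invertible `N×N` matrix,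
`δ_K(z) = sup_{π∈K}(-π⬝z)` (valued in `EReal`), and
`M = sup { x*s + v*y + ξ⬝γ : x > 0, v = x*r + ξ⬝θ, x⁻¹ • (σᵀ)⁻¹ ξ ∈ K }`.
Then `M = 0` if `s + y*r + δ_K(-σ(y•θ + γ)) ≤ 0`, and `M = +∞` otherwise. -/
theorem dual_penalty_conjugate
    {N : ℕ} (K : Set (Fin N → ℝ)) (hKclosed : IsClosed K) (hKconv : Convex ℝ K)
    (h0K : (0 : Fin N → ℝ) ∈ K)
    (σ : Matrix (Fin N) (Fin N) ℝ) (hσ : IsUnit σ.det)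
    (θ γv : Fin N → ℝ) (r y s : ℝ)
    (δK : (Fin N → ℝ) → EReal)
    (hδK : ∀ z, δK z = ⨆ π ∈ K, ((-(π ⬝ᵥ z) : ℝ) : EReal))
    (M : EReal)
    (hM : M = sSup {m : EReal | ∃ x v ξ, 0 < x ∧ v = x * r + ξ ⬝ᵥ θ ∧
      x⁻¹ • (σ.transpose⁻¹.mulVec ξ) ∈ K ∧
      m = ((x * s + v * y + ξ ⬝ᵥ γv : ℝ) : EReal)}) :
    (((s + y * r : ℝ) : EReal) + δK (-(σ.mulVec (y • θ + γv))) ≤ 0 → M = 0) ∧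
    (¬ ((s + y * r : ℝ) : EReal) + δK (-(σ.mulVec (y • θ + γv))) ≤ 0 → M = ⊤) := by
  rw [objective_set_eq K σ hσ] at hM
  have hcond : ((s + y * r : ℝ) : EReal) + δK (-(σ.mulVec (y • θ + γv))) ≤ 0 ↔
      ∀ π ∈ K, s + y * r + π ⬝ᵥ σ.mulVec (y • θ + γv) ≤ 0 := by
    rw [coe_add_le_zero_iff, hδK, iSup₂_le_iff]
    refine forall₂_congr fun π _ => ?_
    rw [EReal.coe_le_coe_iff, dotProduct_neg, neg_neg]
    constructor <;> intro h <;> linarith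
  rw [hcond, hM]
  constructor
  · intro h
    apply le_antisymm
    · refine sSup_le ?_
      rintro _ ⟨x, π, hπ, hx, rfl⟩
      exact_mod_cast mul_nonpos_of_nonneg_of_nonpos hx.le (h π hπ)
    · refine EReal.ge_of_forall_gt_iff_ge.1 fun b hb => ?_
      have hb' : b < 0 := by exact_mod_cast hb
      have hc : s + y * r ≤ 0 := by simpa using h 0 h0K
      -- With `π = 0`, this `x` makes the objective at least `b`; the `1 -` avoids division by `0`.
      have hd : 0 < 1 - (s + y * r) := by linarith
      refine le_trans ?_ (le_sSup ⟨-b / (1 - (s + y * r)), 0, h0K, div_pos (by linarith) hd, rfl⟩)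
      rw [EReal.coe_le_coe_iff, zero_dotProduct, add_zero, div_mul_eq_mul_div, le_div_iff₀ hd]
      nlinarith
  · intro h
    push Not at h
    obtain ⟨π, hπ, ha⟩ := h
    rw [EReal.eq_top_iff_forall_lt]
    intro b
    refine lt_of_lt_of_le ?_ (le_sSup
      ⟨(|b| + 1) / (s + y * r + π ⬝ᵥ σ.mulVec (y • θ + γv)), π, hπ, by positivity, rfl⟩)
    rw [EReal.coe_lt_coe_iff, div_mul_cancel₀ _ ha.ne']
    linarith [le_abs_self b]
end

section
/- For x > 0 let H(x) := ( 2 / (−1 + √(1+4x)) )^{1/2} and define the non-HARA utility U(x) := (1/3)·H(x)⁻³ + H(x)⁻¹ + x·H(x). Then U is differentiable on (0,∞) with U'(x) = H(x) for every x > 0. -/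
/-!
The derivative follows from an envelope argument: by the chain rule,
`U' = H + (x - H⁻⁴ - H⁻²) * H'`, and the bracket vanishes because `H` inverts
`y ↦ y⁻⁴ + y⁻²`. So only the differentiability of `H` on `(0,∞)` is needed, not a formula for `H'`.
-/

/-- The defining equation `H⁻⁴ + H⁻² = x`, stated for `h = H x`. -/
lemma nonHARA_inverse_eq {x h : ℝ} (hx : 0 < x)
    (hh : h = Real.sqrt (2 / (-1 + Real.sqrt (1 + 4 * x)))) :
    0 < h ∧ (h ^ 4)⁻¹ + (h ^ 2)⁻¹ = x := by
  have hs : 1 < Real.sqrt (1 + 4 * x) := by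
    rw [Real.lt_sqrt (by norm_num)]
    linarith
  have hsq : Real.sqrt (1 + 4 * x) ^ 2 = 1 + 4 * x := Real.sq_sqrt (by linarith)
  have hpos : 0 < 2 / (-1 + Real.sqrt (1 + 4 * x)) := div_pos (by norm_num) (by linarith)
  have h2 : (h ^ 2)⁻¹ = (-1 + Real.sqrt (1 + 4 * x)) / 2 := by
    rw [hh, Real.sq_sqrt hpos.le, inv_div]
  refine ⟨hh ▸ Real.sqrt_pos.mpr hpos, ?_⟩
  have h4 : (h ^ 4)⁻¹ = ((h ^ 2)⁻¹) ^ 2 := by rw [inv_pow, ← pow_mul]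
  rw [h4, h2]
  linear_combination hsq / 4

lemma nonHARA_differentiableAt {x : ℝ} (hx : 0 < x) :
    DifferentiableAt ℝ (fun x : ℝ => Real.sqrt (2 / (-1 + Real.sqrt (1 + 4 * x)))) x := by
  have hs : 1 < Real.sqrt (1 + 4 * x) := by
    rw [Real.lt_sqrt (by norm_num)]
    linarith
  have hd : 0 < -1 + Real.sqrt (1 + 4 * x) := by linarith
  have h1 : DifferentiableAt ℝ (fun x : ℝ => Real.sqrt (1 + 4 * x)) x :=
    DifferentiableAt.sqrt (by fun_prop) (by linarith)
  exact DifferentiableAt.sqrt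
    ((differentiableAt_const _).fun_div ((differentiableAt_const _).fun_add h1) hd.ne')
    (div_pos (by norm_num) hd).ne'

/-- The non-HARA utility `U(x) = (1/3) H(x)⁻³ + H(x)⁻¹ + x * H(x)`, where
`H(x) = (2/(-1+√(1+4x)))^(1/2)`, is differentiable on `(0,∞)` with `U'(x) = H(x)`. -/
theorem nonHARA_utility_deriv
    (H U : ℝ → ℝ)
    (hH : ∀ x, H x = Real.sqrt (2 / (-1 + Real.sqrt (1 + 4 * x))))
    (hU : ∀ x, U x = (1 / 3) * (H x) ^ (-3 : ℤ) + (H x)⁻¹ + x * H x) :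
    ∀ x ∈ Set.Ioi (0 : ℝ), HasDerivAt U (H x) x := by
  intro x hx
  obtain ⟨hpos, heq⟩ := nonHARA_inverse_eq hx (hH x)
  have hd : HasDerivAt H (deriv H x) x := by
    have := nonHARA_differentiableAt hx
    rw [← funext hH] at this
    exact this.hasDerivAt
  rw [funext hU]
  have hz := (hasDerivAt_zpow (-3) (H x) (Or.inl hpos.ne')).comp x hd
  refine (((hz.const_mul (1 / 3)).fun_add (hd.fun_inv hpos.ne')).fun_add
    ((hasDerivAt_id' x).fun_mul hd)).congr_deriv ?_
  have h4 : H x ^ ((-3 : ℤ) - 1) = (H x ^ 4)⁻¹ := by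
    rw [show ((-3 : ℤ) - 1) = -((4 : ℕ) : ℤ) by norm_num, zpow_neg, zpow_natCast]
  rw [h4]
  push_cast
  linear_combination -deriv H x * heq
end

section
/- For x > 0 let H(x) := ( 2 / (−1 + √(1+4x)) )^{1/2} and U(x) := (1/3)·H(x)⁻³ + H(x)⁻¹ + x·H(x). Then for every y > 0, sup_{x>0} ( U(x) − x·y ) = (1/3)·y⁻³ + y⁻¹, and the supremum is attained at x = y⁻⁴ + y⁻². -/
/-!
Parametrise the half-line by `x = a⁴ + a²` with `a > 0`. Then `H x = a⁻¹`
(`sqrt_two_div_eq_inv`) and `U x = (4/3) a³ + 2 a`. With `b = y⁻¹` the claimed supremum is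
`b³/3 + b`, and its difference with `U x - x * y`, multiplied by `b`, is
`(a - b)² + (a - b)² (3a² + 2ab + b²) / 3 ≥ 0`, which vanishes at `a = b`.
The parametrisation covers all `x > 0` because `t² + t = x` has a positive root `t = a²`
(`exists_pos_pow_four_add_sq`).
-/

theorem sqrt_two_div_eq_inv {a : ℝ} (ha : 0 < a) :
    Real.sqrt (2 / (-1 + Real.sqrt (1 + 4 * (a ^ 4 + a ^ 2)))) = a⁻¹ := by
  have h1 : Real.sqrt (1 + 4 * (a ^ 4 + a ^ 2)) = 1 + 2 * a ^ 2 := by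
    rw [show 1 + 4 * (a ^ 4 + a ^ 2) = (1 + 2 * a ^ 2) ^ 2 by ring]
    exact Real.sqrt_sq (by positivity)
  have h2 : 2 / (-1 + (1 + 2 * a ^ 2)) = (a⁻¹) ^ 2 := by
    rw [show -1 + (1 + 2 * a ^ 2) = 2 * a ^ 2 by ring]
    field_simp
  rw [h1, h2]
  exact Real.sqrt_sq (by positivity)

theorem exists_pos_pow_four_add_sq {x : ℝ} (hx : 0 < x) :
    ∃ a : ℝ, 0 < a ∧ x = a ^ 4 + a ^ 2 := by
  have hs : Real.sqrt (1 + 4 * x) ^ 2 = 1 + 4 * x := Real.sq_sqrt (by positivity)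
  have h1 : 1 < Real.sqrt (1 + 4 * x) := Real.lt_sqrt_of_sq_lt (by linarith)
  have ht : 0 < (-1 + Real.sqrt (1 + 4 * x)) / 2 := by linarith
  refine ⟨Real.sqrt ((-1 + Real.sqrt (1 + 4 * x)) / 2), Real.sqrt_pos.2 ht, ?_⟩
  have h2 := Real.sq_sqrt ht.le
  rw [show ∀ r : ℝ, r ^ 4 = (r ^ 2) ^ 2 from fun r => by ring, h2]
  linarith

/-- The gap `b³/3 + b - ((4/3) a³ + 2a - (a⁴ + a²) / b)` is nonnegative, since `b` times it is
`(a - b)² + (a - b)² (3a² + 2ab + b²) / 3`. -/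
theorem conjugate_gap {a b : ℝ} (ha : 0 < a) (hb : 0 < b) :
    4 / 3 * a ^ 3 + 2 * a - (a ^ 4 + a ^ 2) * b⁻¹ ≤ 1 / 3 * b ^ 3 + b := by
  have h : 1 / 3 * b ^ 3 + b - (4 / 3 * a ^ 3 + 2 * a - (a ^ 4 + a ^ 2) * b⁻¹)
      = ((a - b) ^ 2 + (a - b) ^ 2 * (3 * a ^ 2 + 2 * a * b + b ^ 2) / 3) / b := by
    field_simp
    ring
  have h' : 0 ≤ ((a - b) ^ 2 + (a - b) ^ 2 * (3 * a ^ 2 + 2 * a * b + b ^ 2) / 3) / b := by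
    positivity
  linarith

/-- Conjugate of the non-HARA utility `U(x) = (1/3) H(x)⁻³ + H(x)⁻¹ + x * H(x)`,
`H(x) = (2/(-1+√(1+4x)))^(1/2)`: for every `y > 0`,
`sup_{x>0} (U x - x*y) = (1/3) y⁻³ + y⁻¹`, attained at `x = y⁻⁴ + y⁻²`. -/
theorem nonHARA_utility_conjugate
    (H U : ℝ → ℝ)
    (hH : ∀ x, H x = Real.sqrt (2 / (-1 + Real.sqrt (1 + 4 * x))))
    (hU : ∀ x, U x = (1 / 3) * (H x) ^ (-3 : ℤ) + (H x)⁻¹ + x * H x) :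
    ∀ y ∈ Set.Ioi (0 : ℝ),
      IsGreatest {z | ∃ x ∈ Set.Ioi (0 : ℝ), z = U x - x * y}
        ((1 / 3) * y ^ (-3 : ℤ) + y⁻¹) ∧
      U (y ^ (-4 : ℤ) + y ^ (-2 : ℤ)) - (y ^ (-4 : ℤ) + y ^ (-2 : ℤ)) * y
        = (1 / 3) * y ^ (-3 : ℤ) + y⁻¹ := by
  have hUa : ∀ a : ℝ, 0 < a → U (a ^ 4 + a ^ 2) = 4 / 3 * a ^ 3 + 2 * a := by
    intro a ha
    have h3 : (a⁻¹) ^ (-3 : ℤ) = a ^ 3 := by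
      rw [inv_zpow', neg_neg]
      norm_cast
    rw [hU, hH, sqrt_two_div_eq_inv ha, h3, inv_inv]
    field_simp
    ring
  intro y hy
  obtain ⟨b, hb, rfl⟩ : ∃ b : ℝ, 0 < b ∧ y = b⁻¹ := ⟨y⁻¹, inv_pos.2 hy, (inv_inv y).symm⟩
  have e2 : (b⁻¹) ^ (-2 : ℤ) = b ^ 2 := by
    rw [inv_zpow', neg_neg]
    norm_cast
  have e3 : (b⁻¹) ^ (-3 : ℤ) = b ^ 3 := by
    rw [inv_zpow', neg_neg]
    norm_cast
  have e4 : (b⁻¹) ^ (-4 : ℤ) = b ^ 4 := by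
    rw [inv_zpow', neg_neg]
    norm_cast
  rw [e2, e3, e4, inv_inv]
  have hval : U (b ^ 4 + b ^ 2) - (b ^ 4 + b ^ 2) * b⁻¹ = 1 / 3 * b ^ 3 + b := by
    rw [hUa b hb]
    field_simp
    ring
  refine ⟨⟨⟨b ^ 4 + b ^ 2, Set.mem_Ioi.2 (by positivity), hval.symm⟩, ?_⟩, hval⟩
  rintro z ⟨x, hx, rfl⟩
  obtain ⟨a, ha, rfl⟩ := exists_pos_pow_four_add_sq hx
  rw [hUa a ha]
  exact conjugate_gap ha hb
end

section
/- Let r, θ̂ ∈ ℝ and T > 0. Define v : [0,T] × (0,∞) → ℝ by v(s,y) := (1/3)·y⁻³·e^{(3r+6θ̂²)(T−s)} + y⁻¹·e^{(r+θ̂²)(T−s)}. Then v satisfies the dual HJB equation ∂v/∂s (s,y) − r·y·∂v/∂y (s,y) + ½·θ̂²·y²·∂²v/∂y² (s,y) = 0 for all (s,y) ∈ (0,T) × (0,∞), together with the terminal condition v(T,y) = (1/3)y⁻³ + y⁻¹. -/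
/-!
For each exponent `m`, the function `e^{c (T - s)} y^m` is an eigenfunction of both `∂/∂s` (eigenvalue
`-c`) and of the Euler-type operator `-r y ∂_y + ½ θ² y² ∂_y²` (eigenvalue `-r m + ½ θ² m (m - 1)`).
For `m = -3` the latter eigenvalue is `3 r + 6 θ²` and for `m = -1` it is `r + θ²`, which are exactly
the exponential rates of the two terms of `v`, so each term solves the equation separately.
-/

theorem hasDerivAt_two_zpow (a b : ℝ) (m n : ℤ) {y : ℝ} (hy : y ≠ 0) :
    HasDerivAt (fun x : ℝ => a * x ^ m + b * x ^ n)
      (a * m * y ^ (m - 1) + b * n * y ^ (n - 1)) y := by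
  have h := ((hasDerivAt_zpow m y (Or.inl hy)).const_mul a).add
    ((hasDerivAt_zpow n y (Or.inl hy)).const_mul b)
  rw [mul_assoc, mul_assoc]
  exact h

theorem deriv_deriv_two_zpow (a b : ℝ) (m n : ℤ) {y : ℝ} (hy : y ≠ 0) :
    deriv (deriv (fun x : ℝ => a * x ^ m + b * x ^ n)) y =
      a * m * (m - 1 : ℤ) * y ^ (m - 1 - 1) + b * n * (n - 1 : ℤ) * y ^ (n - 1 - 1) := by
  -- The first-derivative formula holds near `y`, not at `0`.
  have h : deriv (fun x : ℝ => a * x ^ m + b * x ^ n) =ᶠ[nhds y]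
      fun x => a * m * x ^ (m - 1) + b * n * x ^ (n - 1) := by
    filter_upwards [isOpen_ne.mem_nhds hy] with x hx
    exact (hasDerivAt_two_zpow a b m n hx).deriv
  rw [h.deriv_eq]
  exact (hasDerivAt_two_zpow _ _ _ _ hy).deriv

theorem hasDerivAt_exp_mul_sub (c T s : ℝ) :
    HasDerivAt (fun s' : ℝ => Real.exp (c * (T - s'))) (-c * Real.exp (c * (T - s))) s := by
  have h := (((hasDerivAt_id' s).const_sub T).const_mul c).exp
  convert h using 1
  ring


/-- The candidate dual value function of the non-HARA example,
`v(s,y) = (1/3) y⁻³ e^{(3r+6θ̂²)(T-s)} + y⁻¹ e^{(r+θ̂²)(T-s)}`, satisfies the dual HJB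
equation `v_s - r y v_y + ½ θ̂² y² v_{yy} = 0` on `(0,T) × (0,∞)` together with the
terminal condition `v(T,y) = (1/3) y⁻³ + y⁻¹`. -/
theorem nonHARA_dual_HJB
    (r θ T : ℝ) (hT : 0 < T)
    (v : ℝ → ℝ → ℝ)
    (hv : ∀ s y, v s y = (1 / 3) * y ^ (-3 : ℤ) * Real.exp ((3 * r + 6 * θ ^ 2) * (T - s))
      + y⁻¹ * Real.exp ((r + θ ^ 2) * (T - s))) :
    (∀ s ∈ Set.Ioo (0 : ℝ) T, ∀ y ∈ Set.Ioi (0 : ℝ),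
      deriv (fun s' => v s' y) s - r * y * deriv (fun y' => v s y') y
        + (1 / 2) * θ ^ 2 * y ^ 2 * deriv (deriv (fun y' => v s y')) y = 0) ∧
    (∀ y ∈ Set.Ioi (0 : ℝ), v T y = (1 / 3) * y ^ (-3 : ℤ) + y⁻¹) := by
  refine ⟨fun s _ y hy => ?_, fun y _ => by simp [hv]⟩
  have hy0 : y ≠ 0 := ne_of_gt hy
  have hfun : (fun y' => v s y') = fun x : ℝ =>
      ((1 / 3) * Real.exp ((3 * r + 6 * θ ^ 2) * (T - s))) * x ^ (-3 : ℤ)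
        + Real.exp ((r + θ ^ 2) * (T - s)) * x ^ (-1 : ℤ) := by
    funext x
    rw [hv, zpow_neg_one]
    ring
  have hs : deriv (fun s' => v s' y) s =
      (1 / 3) * y ^ (-3 : ℤ) * (-(3 * r + 6 * θ ^ 2)
          * Real.exp ((3 * r + 6 * θ ^ 2) * (T - s)))
        + y⁻¹ * (-(r + θ ^ 2) * Real.exp ((r + θ ^ 2) * (T - s))) := by
    simp only [hv]
    exact (((hasDerivAt_exp_mul_sub _ T s).const_mul _).add
      ((hasDerivAt_exp_mul_sub _ T s).const_mul _)).deriv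
  rw [hs, hfun, (hasDerivAt_two_zpow _ _ _ _ hy0).deriv, deriv_deriv_two_zpow _ _ _ _ hy0]
  generalize Real.exp ((3 * r + 6 * θ ^ 2) * (T - s)) = E
  generalize Real.exp ((r + θ ^ 2) * (T - s)) = F
  have e1 : y ^ (-3 - 1 : ℤ) = (y ^ 4)⁻¹ := by norm_num [zpow_neg]
  have e2 : y ^ (-3 - 1 - 1 : ℤ) = (y ^ 5)⁻¹ := by norm_num [zpow_neg]
  have e3 : y ^ (-1 - 1 : ℤ) = (y ^ 2)⁻¹ := by norm_num [zpow_neg]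
  have e4 : y ^ (-1 - 1 - 1 : ℤ) = (y ^ 3)⁻¹ := by norm_num [zpow_neg]
  have e5 : y ^ (-3 : ℤ) = (y ^ 3)⁻¹ := by norm_num [zpow_neg]
  rw [e1, e2, e3, e4, e5]
  push_cast
  field_simp
  ring
end
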